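/- Let F be a field of characteristic zero, c ∈ F^×, H_F = {diag(s, s⁻¹) : s ∈ F^×} ⊆ SL₂(F), and 𝔞_c ⊆ 𝔰𝔩₂(F) the line spanned by the matrix X_c with first row (0, c) and second row (1, 0). Then for s ∈ F^×: the element diag(s, s⁻¹) satisfies diag(s,s⁻¹)⁻¹ 𝔞_c diag(s,s⁻¹) = 𝔞_c if and only if s⁴ = 1, and it fixes every element of 𝔞_c under conjugation if and only if s² = 1. Consequently the quotient of the stabilizer of 𝔞_c in H_F by its pointwise fixator is a finite group of order equal to half the number of fourth roots of unity in F. -/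

import Mathlib

open Matrix

/-- The element `h = diag(s, s⁻¹)` of the diagonal torus `H_F`, as a unit of the matrix
ring (it lies in `SL₂(F) ⊆ GL₂(F)`). -/
def Hu (F : Type*) [Field F] (s : Fˣ) : (Matrix (Fin 2) (Fin 2) F)ˣ where
  val := diagonal ![(s : F), ((s⁻¹ : Fˣ) : F)]
  inv := diagonal ![((s⁻¹ : Fˣ) : F), (s : F)]
  val_inv := by
    rw [diagonal_mul_diagonal]
    ext i j
    fin_cases i <;> fin_cases j <;> simp [Matrix.one_apply]
  inv_val := by
    rw [diagonal_mul_diagonal]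
    ext i j
    fin_cases i <;> fin_cases j <;> simp [Matrix.one_apply]

/-- Conjugation `X ↦ h⁻¹ X h` by `h = diag(s, s⁻¹)`. -/
def conjH (F : Type*) [Field F] (s : Fˣ) (X : Matrix (Fin 2) (Fin 2) F) :
    Matrix (Fin 2) (Fin 2) F :=
  (((Hu F s)⁻¹ : (Matrix (Fin 2) (Fin 2) F)ˣ) : Matrix (Fin 2) (Fin 2) F) * X *
    ((Hu F s : (Matrix (Fin 2) (Fin 2) F)ˣ) : Matrix (Fin 2) (Fin 2) F)

lemma Hu_one (F : Type*) [Field F] : Hu F (1 : Fˣ) = 1 := by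
  apply Units.ext
  show diagonal ![((1 : Fˣ) : F), (((1 : Fˣ)⁻¹ : Fˣ) : F)] = 1
  ext i j
  fin_cases i <;> fin_cases j <;> simp [Matrix.one_apply]

lemma Hu_mul (F : Type*) [Field F] (s t : Fˣ) : Hu F (s * t) = Hu F s * Hu F t := by
  apply Units.ext
  rw [Units.val_mul]
  show diagonal ![((s * t : Fˣ) : F), (((s * t)⁻¹ : Fˣ) : F)]
      = diagonal ![(s : F), ((s⁻¹ : Fˣ) : F)] * diagonal ![(t : F), ((t⁻¹ : Fˣ) : F)]
  rw [diagonal_mul_diagonal]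
  ext i j
  fin_cases i <;> fin_cases j <;> simp [_root_.mul_inv_rev, mul_comm]

lemma Hu_inv (F : Type*) [Field F] (s : Fˣ) : Hu F s⁻¹ = (Hu F s)⁻¹ := by
  apply Units.ext
  show diagonal ![((s⁻¹ : Fˣ) : F), (((s⁻¹)⁻¹ : Fˣ) : F)]
      = diagonal ![((s⁻¹ : Fˣ) : F), (s : F)]
  rw [inv_inv]

private lemma conj_key (F : Type*) [Field F] (u : (Matrix (Fin 2) (Fin 2) F)ˣ)
    (X : Matrix (Fin 2) (Fin 2) F) :
    (u : Matrix (Fin 2) (Fin 2) F) *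
        (((u⁻¹ : (Matrix (Fin 2) (Fin 2) F)ˣ) : Matrix (Fin 2) (Fin 2) F) * X *
          (u : Matrix (Fin 2) (Fin 2) F)) *
        ((u⁻¹ : (Matrix (Fin 2) (Fin 2) F)ˣ) : Matrix (Fin 2) (Fin 2) F) = X := by
  rw [mul_assoc ((u⁻¹ : (Matrix (Fin 2) (Fin 2) F)ˣ) : Matrix (Fin 2) (Fin 2) F) X
      (u : Matrix (Fin 2) (Fin 2) F),
    Units.mul_inv_cancel_left, Units.mul_inv_cancel_right]

lemma conjH_mul (F : Type*) [Field F] (s t : Fˣ) (X : Matrix (Fin 2) (Fin 2) F) :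
    conjH F (s * t) X = conjH F t (conjH F s X) := by
  unfold conjH
  rw [Hu_mul, _root_.mul_inv_rev, Units.val_mul, Units.val_mul]
  simp [mul_assoc]

lemma conjH_inv_conjH (F : Type*) [Field F] (s : Fˣ) (X : Matrix (Fin 2) (Fin 2) F) :
    conjH F s⁻¹ (conjH F s X) = X := by
  unfold conjH
  rw [Hu_inv, inv_inv]
  exact conj_key F (Hu F s) X

/-- The Cartan subspace `𝔞_c = {(0, ct; t, 0) : t ∈ F}`. -/
def cartanLine (F : Type*) [Field F] (c : F) : Set (Matrix (Fin 2) (Fin 2) F) :=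
  {X | ∃ t : F, X = !![0, c * t; t, 0]}

/-- The stabilizer of `𝔞_c` in `H_F ≅ Fˣ`: those `s` with `h⁻¹ 𝔞_c h = 𝔞_c`. -/
def stabSubgroup (F : Type*) [Field F] (c : F) : Subgroup Fˣ where
  carrier := {s : Fˣ | conjH F s '' cartanLine F c = cartanLine F c}
  one_mem' := by
    show conjH F 1 '' cartanLine F c = cartanLine F c
    have h : conjH F (1 : Fˣ) = id := by
      funext X
      simp [conjH, Hu_one]
    rw [h, Set.image_id]
  mul_mem' := by
    intro s t hs ht
    show conjH F (s * t) '' cartanLine F c = cartanLine F c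
    have h : conjH F (s * t) = conjH F t ∘ conjH F s := funext fun X => conjH_mul F s t X
    rw [h, Set.image_comp]
    rw [show conjH F s '' cartanLine F c = cartanLine F c from hs]
    exact ht
  inv_mem' := by
    intro s hs
    show conjH F s⁻¹ '' cartanLine F c = cartanLine F c
    conv_lhs => rw [← show conjH F s '' cartanLine F c = cartanLine F c from hs]
    rw [← Set.image_comp]
    have h : conjH F s⁻¹ ∘ conjH F s = id := funext fun X => conjH_inv_conjH F s X
    rw [h, Set.image_id]

/-- The pointwise fixator of `𝔞_c` in `H_F ≅ Fˣ`: those `s` with `h⁻¹ X h = X` for all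
`X ∈ 𝔞_c`. -/
def fixSubgroup (F : Type*) [Field F] (c : F) : Subgroup Fˣ where
  carrier := {s : Fˣ | ∀ X ∈ cartanLine F c, conjH F s X = X}
  one_mem' := by
    intro X hX
    simp [conjH, Hu_one]
  mul_mem' := by
    intro s t hs ht X hX
    rw [conjH_mul, hs X hX, ht X hX]
  inv_mem' := by
    intro s hs X hX
    calc conjH F s⁻¹ X = conjH F s⁻¹ (conjH F s X) := by rw [hs X hX]
      _ = X := conjH_inv_conjH F s X

/-!
Conjugation by `diag(s, s⁻¹)` scales the upper right entry by `s⁻²` and the lower left entry by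
`s²`, so it carries `𝔞_c` to `𝔞_{s⁻⁴c}`. As `𝔞_c` determines `c`, the stabilizer of `𝔞_c` is
`μ₄(F)`; an element fixes `𝔞_c` pointwise exactly when the scalar `s²` is trivial, so the fixator
is `μ₂(F)`, which has order two outside characteristic two.
-/

lemma relIndex_mul_natCard {G : Type*} [Group G] {H K : Subgroup G} (hHK : H ≤ K) :
    H.relIndex K * Nat.card H = Nat.card K := by
  simpa [mul_comm] using Subgroup.relIndex_mul_relIndex ⊥ H K bot_le hHK

lemma natCard_rootsOfUnity_eq_natCard_pow_eq_one (M : Type*) [CommMonoid M] (n : ℕ) [NeZero n] :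
    Nat.card (rootsOfUnity n M) = Nat.card {x : M | x ^ n = 1} :=
  Nat.card_congr
    { toFun := fun ζ => ⟨((ζ : Mˣ) : M), (mem_rootsOfUnity' n _).1 ζ.2⟩
      invFun := fun x => rootsOfUnity.mkOfPowEq (x : M) x.2
      left_inv := fun _ => rootsOfUnity.coe_injective rfl
      right_inv := fun _ => rfl }

lemma natCard_rootsOfUnity_two {R : Type*} [CommRing R] [IsDomain R] (hR : ringChar R ≠ 2) :
    Nat.card (rootsOfUnity 2 R) = 2 :=
  (IsPrimitiveRoot.neg_one (ringChar R) hR).card_rootsOfUnity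

section Torus

variable {F : Type*} [Field F]

lemma conjH_antidiagonal (s : Fˣ) (a b : F) :
    conjH F s !![0, a; b, 0] = !![0, (s : F)⁻¹ ^ 2 * a; (s : F) ^ 2 * b, 0] := by
  change diagonal ![((s⁻¹ : Fˣ) : F), (s : F)] * !![0, a; b, 0] *
    diagonal ![(s : F), ((s⁻¹ : Fˣ) : F)] = _
  ext i j
  fin_cases i <;> fin_cases j <;> simp [mul_apply, Fin.sum_univ_two] <;> ring

lemma antidiagonal_mem_cartanLine_iff {c a b : F} :
    !![0, a; b, 0] ∈ cartanLine F c ↔ a = c * b := by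
  simp [cartanLine]

lemma cartanLine_injective : Function.Injective (cartanLine F) := by
  intro c d h
  have hmem : !![0, c; 1, 0] ∈ cartanLine F d :=
    h ▸ antidiagonal_mem_cartanLine_iff.2 (mul_one c).symm
  simpa using antidiagonal_mem_cartanLine_iff.1 hmem

lemma mapsTo_conjH_cartanLine (s : Fˣ) (c : F) :
    Set.MapsTo (conjH F s) (cartanLine F c) (cartanLine F ((s : F)⁻¹ ^ 4 * c)) := by
  rintro _ ⟨t, rfl⟩
  rw [conjH_antidiagonal, antidiagonal_mem_cartanLine_iff]
  field_simp

lemma conjH_image_cartanLine (s : Fˣ) (c : F) :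
    conjH F s '' cartanLine F c = cartanLine F ((s : F)⁻¹ ^ 4 * c) := by
  refine (mapsTo_conjH_cartanLine s c).image_subset.antisymm fun X hX => ?_
  have hpre : conjH F s⁻¹ X ∈ cartanLine F c := by
    simpa [← mul_assoc, ← mul_pow] using mapsTo_conjH_cartanLine s⁻¹ _ hX
  exact ⟨conjH F s⁻¹ X, hpre, by simpa only [inv_inv] using conjH_inv_conjH F s⁻¹ X⟩

lemma conjH_image_cartanLine_eq_iff {c : F} (hc : c ≠ 0) (s : Fˣ) :
    conjH F s '' cartanLine F c = cartanLine F c ↔ (s : F) ^ 4 = 1 := by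
  rw [conjH_image_cartanLine, cartanLine_injective.eq_iff, mul_eq_right₀ hc, inv_pow, inv_eq_one]

lemma forall_mem_cartanLine_conjH_eq_iff (c : F) (s : Fˣ) :
    (∀ X ∈ cartanLine F c, conjH F s X = X) ↔ (s : F) ^ 2 = 1 := by
  constructor
  · intro h
    have hfix := h _ ⟨1, rfl⟩
    rw [conjH_antidiagonal] at hfix
    simpa using congrFun₂ hfix 1 0
  · rintro hs _ ⟨t, rfl⟩
    rw [conjH_antidiagonal, inv_pow, hs, inv_one, one_mul, one_mul]

lemma stabSubgroup_eq_rootsOfUnity {c : F} (hc : c ≠ 0) :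
    stabSubgroup F c = rootsOfUnity 4 F :=
  Subgroup.ext fun s => (conjH_image_cartanLine_eq_iff hc s).trans (mem_rootsOfUnity' 4 s).symm

lemma fixSubgroup_eq_rootsOfUnity (c : F) : fixSubgroup F c = rootsOfUnity 2 F :=
  Subgroup.ext fun s => (forall_mem_cartanLine_conjH_eq_iff c s).trans (mem_rootsOfUnity' 2 s).symm

end Torus

theorem stab_quotient_fix_order_general (F : Type*) [Field F] (hF : ringChar F ≠ 2) (c : F)
    (hc : c ≠ 0) :
    (∀ s : Fˣ,
      (conjH F s '' cartanLine F c = cartanLine F c ↔ (s : F) ^ 4 = 1) ∧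
      ((∀ X ∈ cartanLine F c, conjH F s X = X) ↔ (s : F) ^ 2 = 1)) ∧
    Finite (stabSubgroup F c ⧸ (fixSubgroup F c).subgroupOf (stabSubgroup F c)) ∧
    Nat.card (stabSubgroup F c ⧸ (fixSubgroup F c).subgroupOf (stabSubgroup F c)) * 2
      = Nat.card {s : F | s ^ 4 = 1} := by
  refine ⟨fun s => ⟨conjH_image_cartanLine_eq_iff hc s,
    forall_mem_cartanLine_conjH_eq_iff c s⟩, ?_⟩
  rw [stabSubgroup_eq_rootsOfUnity hc, fixSubgroup_eq_rootsOfUnity c]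
  refine ⟨inferInstance, ?_⟩
  have hle : rootsOfUnity 2 F ≤ rootsOfUnity 4 F := rootsOfUnity_le_of_dvd (by decide)
  calc (rootsOfUnity 2 F).relIndex (rootsOfUnity 4 F) * 2
      = (rootsOfUnity 2 F).relIndex (rootsOfUnity 4 F) * Nat.card (rootsOfUnity 2 F) := by
        rw [natCard_rootsOfUnity_two hF]
    _ = Nat.card (rootsOfUnity 4 F) := relIndex_mul_natCard hle
    _ = Nat.card {s : F | s ^ 4 = 1} := natCard_rootsOfUnity_eq_natCard_pow_eq_one F 4

/-- For `s ∈ F^×`: `diag(s,s⁻¹)` stabilizes `𝔞_c` iff `s⁴ = 1`, and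
fixes `𝔞_c` pointwise iff `s² = 1`; consequently the quotient of the stabilizer of `𝔞_c`
in `H_F` by its pointwise fixator is a finite group whose order is half the number of
fourth roots of unity in `F`. -/
theorem stab_quotient_fix_order (F : Type*) [Field F] [CharZero F] (c : F) (hc : c ≠ 0) :
    (∀ s : Fˣ,
      (conjH F s '' cartanLine F c = cartanLine F c ↔ (s : F) ^ 4 = 1) ∧
      ((∀ X ∈ cartanLine F c, conjH F s X = X) ↔ (s : F) ^ 2 = 1)) ∧
    Finite (stabSubgroup F c ⧸ (fixSubgroup F c).subgroupOf (stabSubgroup F c)) ∧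
    Nat.card (stabSubgroup F c ⧸ (fixSubgroup F c).subgroupOf (stabSubgroup F c)) * 2
      = Nat.card {s : F | s ^ 4 = 1} :=
  stab_quotient_fix_order_general F (by simp [ringChar.eq_zero]) c hc
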